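/- Let λ > 0 and define c_λ(h) := ∫_ℝ exp(−λ|h−u|)·exp(−λ|u|) du for h ∈ ℝ. Then (2·c_λ(1) − c_λ(0) − c_λ(2)) / (2·(c_λ(0) − c_λ(1))) = exp(−λ)·((1+λ)/2 + (1/2)·(1 + λ − e^λ + λ²·e^{−λ})/(1 − e^{−λ} − λ·e^{−λ})). -/

import Mathlib

open MeasureTheory Real

/-!
For `h ≥ 0` the convolution of `exp (-lam |·|)` with itself is
`exp (-lam h) (h + 1 / lam)`: the exponent is constant for `u` between `0` and `h`, which
contributes `h exp (-lam h)`, and each of the two tails contributes `exp (-lam h) / (2 lam)`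
(`wbou_autocovariance`). With `x = exp (-lam)`, so that `exp lam = x⁻¹`, the claim is then a
rational identity in `x` and `lam`, whose denominators do not vanish because
`(1 + lam) x < 1` for `lam > 0`.
-/

/-- Closed form of the (unit-variance) autocovariance function of the well-balanced
Ornstein–Uhlenbeck process. -/
lemma wbou_autocovariance (lam : ℝ) (hlam : 0 < lam) (h : ℝ) (hh : 0 ≤ h) :
    ∫ u : ℝ, Real.exp (-(lam * |h - u|)) * Real.exp (-(lam * |u|))
      = Real.exp (-(lam * h)) * (h + 1 / lam) := by
  set f : ℝ → ℝ := fun u => Real.exp (-(lam * |h - u|)) * Real.exp (-(lam * |u|)) with hf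
  have e1 : Set.EqOn f (fun u => Real.exp (-(lam * h)) * Real.exp ((2 * lam) * u))
      (Set.Iic 0) := by
    intro u hu
    have hu : u ≤ 0 := hu
    simp only [hf]
    rw [abs_of_nonneg (by linarith : 0 ≤ h - u), abs_of_nonpos hu, ← Real.exp_add,
      ← Real.exp_add]
    congr 1
    ring
  have e2 : Set.EqOn f (fun _ => Real.exp (-(lam * h))) (Set.Ioc 0 h) := by
    intro u hu
    simp only [hf]
    rw [abs_of_nonneg (by linarith [hu.2] : 0 ≤ h - u), abs_of_pos hu.1, ← Real.exp_add]
    congr 1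
    ring
  have e3 : Set.EqOn f (fun u => Real.exp (lam * h) * Real.exp ((-(2 * lam)) * u))
      (Set.Ioi h) := by
    intro u hu
    have hu : h < u := hu
    simp only [hf]
    rw [abs_of_nonpos (by linarith : h - u ≤ 0), abs_of_nonneg (by linarith : 0 ≤ u),
      ← Real.exp_add, ← Real.exp_add]
    congr 1
    ring
  have i1 : IntegrableOn f (Set.Iic 0) :=
    IntegrableOn.congr_fun ((integrableOn_exp_mul_Iic (by linarith) 0).const_mul _)
      e1.symm measurableSet_Iic
  have i2 : IntegrableOn f (Set.Ioc 0 h) :=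
    IntegrableOn.congr_fun (integrableOn_const (by simp)) e2.symm measurableSet_Ioc
  have i3 : IntegrableOn f (Set.Ioi h) :=
    IntegrableOn.congr_fun ((integrableOn_exp_mul_Ioi (by linarith) h).const_mul _)
      e3.symm measurableSet_Ioi
  have i23 : IntegrableOn f (Set.Ioi 0) := by
    rw [← Set.Ioc_union_Ioi_eq_Ioi hh]
    exact i2.union i3
  rw [← intervalIntegral.integral_Iic_add_Ioi i1 i23, ← Set.Ioc_union_Ioi_eq_Ioi hh,
    setIntegral_union (Set.Ioc_disjoint_Ioi le_rfl) measurableSet_Ioi i2 i3,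
    setIntegral_congr_fun measurableSet_Iic e1, setIntegral_congr_fun measurableSet_Ioc e2,
    setIntegral_congr_fun measurableSet_Ioi e3, integral_const_mul, integral_const_mul,
    integral_exp_mul_Iic (by linarith), integral_exp_mul_Ioi (by linarith)]
  have hE : Real.exp (-(2 * lam) * h)
      = Real.exp (-(lam * h)) * Real.exp (-(lam * h)) := by
    rw [← Real.exp_add]
    congr 1
    ring
  have hI : Real.exp (lam * h) * Real.exp (-(lam * h)) = 1 := by
    rw [← Real.exp_add]
    simp
  have hT : Real.exp (lam * h) * (-Real.exp (-(2 * lam) * h) / (-(2 * lam)))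
      = Real.exp (-(lam * h)) / (2 * lam) := by
    rw [hE, neg_div_neg_eq, ← mul_div_assoc, ← mul_assoc, hI, one_mul]
  rw [hT]
  simp [hh]
  field_simp
  ring

/-- First-order increment autocorrelation of the well-balanced Ornstein–Uhlenbeck
process: with `c_λ(h) = ∫_ℝ exp(−λ|h−u|)·exp(−λ|u|) du`,
`(2c_λ(1) − c_λ(0) − c_λ(2)) / (2(c_λ(0) − c_λ(1)))
  = exp(−λ)·((1+λ)/2 + (1/2)·(1 + λ − e^λ + λ²e^{−λ})/(1 − e^{−λ} − λe^{−λ}))`. -/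
theorem wbou_first_order_autocorrelation (lam : ℝ) (hlam : 0 < lam)
    (c : ℝ → ℝ)
    (hc : ∀ h : ℝ, c h = ∫ u : ℝ, Real.exp (-(lam * |h - u|)) * Real.exp (-(lam * |u|))) :
    (2 * c 1 - c 0 - c 2) / (2 * (c 0 - c 1))
      = Real.exp (-lam) *
          ((1 + lam) / 2 + 1 / 2 *
            (1 + lam - Real.exp lam + lam ^ 2 * Real.exp (-lam)) /
            (1 - Real.exp (-lam) - lam * Real.exp (-lam))) := by
  have c0 : c 0 = 1 / lam := by
    rw [hc, wbou_autocovariance lam hlam 0 le_rfl]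
    simp
  have c1 : c 1 = Real.exp (-lam) * (1 + 1 / lam) := by
    rw [hc, wbou_autocovariance lam hlam 1 zero_le_one, mul_one]
  have c2 : c 2 = Real.exp (-lam) ^ 2 * (2 + 1 / lam) := by
    rw [hc, wbou_autocovariance lam hlam 2 zero_le_two, sq, ← Real.exp_add]
    ring_nf
  have hx : 0 < Real.exp (-lam) := Real.exp_pos _
  have hinv : Real.exp lam = (Real.exp (-lam))⁻¹ := by rw [Real.exp_neg, inv_inv]
  have hlt : lam + 1 < Real.exp lam := Real.add_one_lt_exp hlam.ne'
  rw [c0, c1, c2]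
  rw [hinv] at hlt ⊢
  generalize Real.exp (-lam) = x at *
  have hD : 0 < 1 - x - lam * x := by
    have := mul_lt_mul_of_pos_right hlt hx
    rw [inv_mul_cancel₀ hx.ne'] at this
    linarith
  have hden : 2 * (1 / lam - x * (1 + 1 / lam)) = 2 * (1 - x - lam * x) / lam := by
    field_simp
    ring
  rw [hden]
  have hD' := hD.ne'
  -- Naming the denominator keeps it a single nonzero factor when fractions are cleared.
  obtain ⟨D, hDdef⟩ : ∃ D, D = 1 - x - lam * x := ⟨_, rfl⟩
  rw [← hDdef] at hD' ⊢
  field_simp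
  rw [hDdef]
  ring
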